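/- arXiv:1911.11949 — 2 statements merged into one kernel-verified Lean document; each statement's English description precedes it below -/
import Mathlib

section
/- Let 0 < k < π²/4, 0 < ξ ≤ η < 1, λ₁, λ₂ ≥ 0, suppose condition [A1] holds, and let ψ : [0,1]×ℝ×ℝ → ℝ be continuous. Suppose cₙ ∈ C²([0,1]) is a lower solution of the BVP −u″ = ψ(x,u,u′), u′(0) = λ₁u(ξ), u′(1) = λ₂u(η), i.e. −cₙ″(x) ≤ ψ(x, cₙ(x), cₙ′(x)) on (0,1), cₙ′(0) = λ₁·cₙ(ξ) and cₙ′(1) ≤ λ₂·cₙ(η), and suppose cₙ₊₁ ∈ C²([0,1]) satisfies −cₙ₊₁″(x) − k·cₙ₊₁(x) = ψ(x, cₙ(x), cₙ′(x)) − k·cₙ(x) on (0,1) with cₙ₊₁′(0) = λ₁·cₙ₊₁(ξ) and cₙ₊₁′(1) = λ₂·cₙ₊₁(η). Then cₙ₊₁(x) ≤ cₙ(x) for all x ∈ [0,1]. -/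
/-
The difference `w = cₙ - cₙ₊₁` satisfies `w'' + k w ≥ 0`, `w'(0) = l1 w(ξ)` and
`w'(1) ≤ l2 w(η)`, so it suffices to show that such a `w` is nonnegative. Put `s = √k`. If `p ≥ 0`
and `p'' = -s² p`, then the Wronskian `w' p - w p'` is nondecreasing. Testing with
`p(t) = sin (s (x - t))` bounds `s w(x)` from below by `s w(0) cos (s x) + w'(0) sin (s x)`, so
only `w(0) ≥ 0` and `w'(0) ≥ 0` remain. The same bound at `ξ`, and the test function equal to
`s cos (s (1 - t)) - l2 sin (s (η - t))` on `[0, η]` and to `s cos (s (1 - t))` on `[η, 1]`, turn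
the two boundary conditions into two linear inequalities in `w(0)` and `w'(0)` whose determinant
is `s D_k`.
-/

open Real Set

/-- `D_k = k·sin √k + λ₂·√k·cos(√k η) + λ₁·(λ₂·sin(√k(η−ξ)) − √k·cos(√k(ξ−1)))`. -/
noncomputable def Dk (k ξ η l1 l2 : ℝ) : ℝ :=
  k * Real.sin (Real.sqrt k) + l2 * Real.sqrt k * Real.cos (Real.sqrt k * η) +
    l1 * (l2 * Real.sin (Real.sqrt k * (η - ξ)) -
      Real.sqrt k * Real.cos (Real.sqrt k * (ξ - 1)))

/-- `w'` and `w''` are the first two derivatives of `w` on `[a, b]`. At the endpoints only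
continuity of `w` and `w'` is asked for, which makes `w'` the one-sided derivative of `w` there. -/
structure HasSecondDerivOn (w w' w'' : ℝ → ℝ) (a b : ℝ) : Prop where
  continuousOn : ContinuousOn w (Icc a b)
  continuousOn_deriv : ContinuousOn w' (Icc a b)
  hasDerivAt : ∀ x ∈ Ioo a b, HasDerivAt w (w' x) x
  hasDerivAt_deriv : ∀ x ∈ Ioo a b, HasDerivAt w' (w'' x) x

namespace HasSecondDerivOn

variable {w w' w'' p p' p'' : ℝ → ℝ} {a b : ℝ}

lemma of_hasDerivAt (h : ∀ x, HasDerivAt w (w' x) x) (h' : ∀ x, HasDerivAt w' (w'' x) x) :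
    HasSecondDerivOn w w' w'' a b where
  continuousOn x _ := (h x).continuousAt.continuousWithinAt
  continuousOn_deriv x _ := (h' x).continuousAt.continuousWithinAt
  hasDerivAt x _ := h x
  hasDerivAt_deriv x _ := h' x

lemma of_contDiff (h : ContDiff ℝ 2 w) :
    HasSecondDerivOn w (deriv w) (deriv (deriv w)) a b :=
  of_hasDerivAt (fun x => (h.differentiable two_ne_zero x).hasDerivAt)
    fun x => (h.differentiable_deriv_two x).hasDerivAt

lemma mono (h : HasSecondDerivOn w w' w'' a b) {c d : ℝ} (hac : a ≤ c) (hdb : d ≤ b) :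
    HasSecondDerivOn w w' w'' c d where
  continuousOn := h.continuousOn.mono (Icc_subset_Icc hac hdb)
  continuousOn_deriv := h.continuousOn_deriv.mono (Icc_subset_Icc hac hdb)
  hasDerivAt x hx := h.hasDerivAt x (Ioo_subset_Ioo hac hdb hx)
  hasDerivAt_deriv x hx := h.hasDerivAt_deriv x (Ioo_subset_Ioo hac hdb hx)

lemma const_mul (c : ℝ) (h : HasSecondDerivOn w w' w'' a b) :
    HasSecondDerivOn (fun x => c * w x) (fun x => c * w' x) (fun x => c * w'' x) a b where
  continuousOn := continuousOn_const.mul h.continuousOn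
  continuousOn_deriv := continuousOn_const.mul h.continuousOn_deriv
  hasDerivAt x hx := (h.hasDerivAt x hx).const_mul c
  hasDerivAt_deriv x hx := (h.hasDerivAt_deriv x hx).const_mul c

lemma sub (hw : HasSecondDerivOn w w' w'' a b) (hp : HasSecondDerivOn p p' p'' a b) :
    HasSecondDerivOn (fun x => w x - p x) (fun x => w' x - p' x) (fun x => w'' x - p'' x) a b where
  continuousOn := hw.continuousOn.sub hp.continuousOn
  continuousOn_deriv := hw.continuousOn_deriv.sub hp.continuousOn_deriv
  hasDerivAt x hx := (hw.hasDerivAt x hx).sub (hp.hasDerivAt x hx)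
  hasDerivAt_deriv x hx := (hw.hasDerivAt_deriv x hx).sub (hp.hasDerivAt_deriv x hx)

lemma wronskian_le_wronskian {q : ℝ → ℝ} (hw : HasSecondDerivOn w w' w'' a b)
    (hp : HasSecondDerivOn p p' p'' a b) (hab : a ≤ b)
    (hwq : ∀ x ∈ Ioo a b, 0 ≤ w'' x + q x * w x) (hpq : ∀ x ∈ Ioo a b, p'' x = -(q x * p x))
    (hp0 : ∀ x ∈ Ioo a b, 0 ≤ p x) :
    w' a * p a - w a * p' a ≤ w' b * p b - w b * p' b := by
  have hderiv : ∀ x ∈ Ioo a b,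
      HasDerivAt (fun x => w' x * p x - w x * p' x) ((w'' x + q x * w x) * p x) x := by
    intro x hx
    refine (((hw.hasDerivAt_deriv x hx).mul (hp.hasDerivAt x hx)).sub
      ((hw.hasDerivAt x hx).mul (hp.hasDerivAt_deriv x hx))).congr_deriv ?_
    rw [hpq x hx]
    ring
  have hmono : MonotoneOn (fun x => w' x * p x - w x * p' x) (Icc a b) := by
    refine monotoneOn_of_hasDerivWithinAt_nonneg (f' := fun x => (w'' x + q x * w x) * p x)
      (convex_Icc a b) ((hw.continuousOn_deriv.mul hp.continuousOn).sub
      (hw.continuousOn.mul hp.continuousOn_deriv)) ?_ ?_ <;> rw [interior_Icc] <;> intro x hx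
    · exact (hderiv x hx).hasDerivWithinAt
    · exact mul_nonneg (hwq x hx) (hp0 x hx)
  exact hmono (left_mem_Icc.2 hab) (right_mem_Icc.2 hab) hab

end HasSecondDerivOn

section Sinusoid

variable (s y a b : ℝ)

lemma hasDerivAt_sin_mul_sub (x : ℝ) :
    HasDerivAt (fun t => sin (s * (y - t))) (-(s * cos (s * (y - x)))) x :=
  (((hasDerivAt_id x).const_sub y).const_mul s).sin.congr_deriv (by simp only [id]; ring)

lemma hasDerivAt_cos_mul_sub (x : ℝ) :
    HasDerivAt (fun t => cos (s * (y - t))) (s * sin (s * (y - x))) x :=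
  (((hasDerivAt_id x).const_sub y).const_mul s).cos.congr_deriv (by simp only [id]; ring)

lemma hasSecondDerivOn_sin_mul_sub :
    HasSecondDerivOn (fun t => sin (s * (y - t))) (fun t => -(s * cos (s * (y - t))))
      (fun t => -(s ^ 2 * sin (s * (y - t)))) a b :=
  .of_hasDerivAt (hasDerivAt_sin_mul_sub s y) fun x =>
    ((hasDerivAt_cos_mul_sub s y x).const_mul s).neg.congr_deriv (by ring)

lemma hasSecondDerivOn_cos_mul_sub :
    HasSecondDerivOn (fun t => cos (s * (y - t))) (fun t => s * sin (s * (y - t)))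
      (fun t => -(s ^ 2 * cos (s * (y - t)))) a b :=
  .of_hasDerivAt (hasDerivAt_cos_mul_sub s y) fun x =>
    ((hasDerivAt_sin_mul_sub s y x).const_mul s).congr_deriv (by ring)

end Sinusoid

section Subsolution

variable {s a b : ℝ} {w w' w'' : ℝ → ℝ}

lemma sinusoid_le_of_nonneg_deriv2_add (hs : 0 ≤ s) (hab : a ≤ b) (hsab : s * (b - a) ≤ π)
    (hw : HasSecondDerivOn w w' w'' a b) (hf : ∀ x ∈ Ioo a b, 0 ≤ w'' x + s ^ 2 * w x) :
    s * w a * cos (s * (b - a)) + w' a * sin (s * (b - a)) ≤ s * w b := by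
  have hsin : ∀ t ∈ Ioo a b, 0 ≤ sin (s * (b - t)) := fun t ht =>
    sin_nonneg_of_nonneg_of_le_pi (mul_nonneg hs (by linarith [ht.2]))
      (le_trans (by gcongr; exact ht.1.le) hsab)
  have h := hw.wronskian_le_wronskian (q := fun _ => s ^ 2)
    (hasSecondDerivOn_sin_mul_sub s b a b) hab hf (fun _ _ => rfl) hsin
  simp only [sub_self, mul_zero, sin_zero, cos_zero] at h
  linarith

lemma deriv_sinusoid_le_of_nonneg_deriv2_add (hs : 0 ≤ s) (hab : a ≤ b)
    (hsab : s * (b - a) ≤ π / 2) (hw : HasSecondDerivOn w w' w'' a b)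
    (hf : ∀ x ∈ Ioo a b, 0 ≤ w'' x + s ^ 2 * w x) :
    w' a * cos (s * (b - a)) - s * w a * sin (s * (b - a)) ≤ w' b := by
  have hcos : ∀ t ∈ Ioo a b, 0 ≤ cos (s * (b - t)) := fun t ht =>
    cos_nonneg_of_neg_pi_div_two_le_of_le
      (by linarith [pi_pos, mul_nonneg hs (sub_nonneg.2 ht.2.le)])
      (le_trans (by gcongr; exact ht.1.le) hsab)
  have h := hw.wronskian_le_wronskian (q := fun _ => s ^ 2)
    (hasSecondDerivOn_cos_mul_sub s b a b) hab hf (fun _ _ => rfl) hcos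
  simp only [sub_self, mul_zero, sin_zero, cos_zero] at h
  linarith

end Subsolution

section UnitInterval

variable {s l η : ℝ}

lemma mul_cos_sub_mul_sin_nonneg (hs : 0 < s) (hsπ : s ≤ π / 2) (hη1 : η ≤ 1)
    (h : 0 ≤ s * cos s - l * sin (s * η)) {t : ℝ} (ht : t ∈ Ioo 0 η) :
    0 ≤ s * cos (s * (1 - t)) - l * sin (s * (η - t)) := by
  have hη0 : 0 < η := ht.1.trans ht.2
  have hsη : s * η ≤ π / 2 := (mul_le_of_le_one_right hs.le hη1).trans hsπ
  have hst : s * t ≤ s * η := by gcongr; exact ht.2.le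
  have hsin_η : 0 < sin (s * η) := sin_pos_of_pos_of_lt_pi (by positivity) (by linarith [pi_pos])
  have hsin_t : 0 ≤ sin (s * t) :=
    sin_nonneg_of_nonneg_of_le_pi (mul_nonneg hs.le ht.1.le) (by linarith [pi_pos])
  have hsin_sub : 0 ≤ sin (s * (η - t)) :=
    sin_nonneg_of_nonneg_of_le_pi (mul_nonneg hs.le (by linarith [ht.2]))
      (by linarith [pi_pos, mul_pos hs ht.1])
  have hcos : 0 ≤ cos (s * (1 - η)) :=
    cos_nonneg_of_neg_pi_div_two_le_of_le
      (by linarith [pi_pos, mul_nonneg hs.le (sub_nonneg.2 hη1)]) (by linarith [mul_pos hs hη0])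
  -- A solution of `p'' = -s² p` on `[0, η]` is a positive combination of its endpoint values.
  have hinterp : (s * cos (s * (1 - t)) - l * sin (s * (η - t))) * sin (s * η) =
      (s * cos s - l * sin (s * η)) * sin (s * (η - t)) +
        s * cos (s * (1 - η)) * sin (s * t) := by
    simp only [mul_sub, mul_one, sin_sub, cos_sub]
    ring
  refine nonneg_of_mul_nonneg_left ?_ hsin_η
  rw [hinterp]
  positivity

lemma le_mul_deriv_one_sub_of_nonneg_deriv2_add {w w' w'' : ℝ → ℝ} (hs : 0 < s) (hsπ : s ≤ π / 2)
    (hη : η ∈ Icc (0 : ℝ) 1) (hl : 0 ≤ s * cos s - l * sin (s * η))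
    (hw : HasSecondDerivOn w w' w'' 0 1) (hf : ∀ x ∈ Ioo (0 : ℝ) 1, 0 ≤ w'' x + s ^ 2 * w x) :
    w' 0 * (s * cos s - l * sin (s * η)) - s * w 0 * (s * sin s + l * cos (s * η)) ≤
      s * (w' 1 - l * w η) := by
  have hleft := (hw.mono le_rfl hη.2).wronskian_le_wronskian (q := fun _ => s ^ 2)
    (((hasSecondDerivOn_cos_mul_sub s 1 0 η).const_mul s).sub
      ((hasSecondDerivOn_sin_mul_sub s η 0 η).const_mul l)) hη.1
    (fun x hx => hf x (Ioo_subset_Ioo_right hη.2 hx)) (fun _ _ => by ring)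
    fun _ ht => mul_cos_sub_mul_sin_nonneg hs hsπ hη.2 hl ht
  have hright := deriv_sinusoid_le_of_nonneg_deriv2_add hs.le hη.2
    (by linarith [mul_nonneg hs.le hη.1]) (hw.mono hη.1 le_rfl)
    (fun x hx => hf x (Ioo_subset_Ioo_left hη.1 hx))
  simp only [sub_zero, sub_self, mul_zero, mul_one, sin_zero, cos_zero] at hleft
  linarith [mul_le_mul_of_nonneg_left hright hs.le]

end UnitInterval

/-- Condition [A1] on the data of the boundary conditions `u'(0) = l1 u(ξ)`, `u'(1) = l2 u(η)`. -/
structure ConditionA1 (k ξ η l1 l2 : ℝ) : Prop where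
  Dk_pos : 0 < Dk k ξ η l1 l2
  right_nonneg : 0 ≤ √k * cos √k - l2 * sin (√k * η)
  left_pos : 0 < √k - l1 * sin (√k * ξ)

section MaximumPrinciple

variable {k ξ η l1 l2 : ℝ}

lemma Dk_eq_boundary_det (hk : 0 ≤ k) :
    Dk k ξ η l1 l2 = (√k * sin √k + l2 * cos (√k * η)) * (√k - l1 * sin (√k * ξ)) -
      l1 * cos (√k * ξ) * (√k * cos √k - l2 * sin (√k * η)) := by
  rw [Dk, mul_sub √k η, mul_sub √k ξ, mul_one, sin_sub, cos_sub]
  linear_combination (-sin √k) * sq_sqrt hk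

lemma ConditionA1.nonneg_of_boundary_ineq (hA : ConditionA1 k ξ η l1 l2) (hk : 0 < k)
    (hl1 : 0 ≤ l1) (hcos : 0 ≤ cos (√k * ξ)) {y y' : ℝ}
    (hleft : l1 * (√k * y * cos (√k * ξ)) ≤ y' * (√k - l1 * sin (√k * ξ)))
    (hright : y' * (√k * cos √k - l2 * sin (√k * η)) ≤
      √k * y * (√k * sin √k + l2 * cos (√k * η))) :
    0 ≤ y ∧ 0 ≤ y' := by
  have hy : 0 ≤ y := by
    refine nonneg_of_mul_nonneg_left ?_ (mul_pos (sqrt_pos.2 hk) hA.Dk_pos)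
    rw [Dk_eq_boundary_det hk.le]
    linarith [mul_le_mul_of_nonneg_right hleft hA.right_nonneg,
      mul_le_mul_of_nonneg_right hright hA.left_pos.le]
  exact ⟨hy, nonneg_of_mul_nonneg_left (le_trans (by positivity) hleft) hA.left_pos⟩

theorem ConditionA1.nonneg_of_nonneg_deriv2_add {w w' w'' : ℝ → ℝ}
    (hA : ConditionA1 k ξ η l1 l2) (hk : 0 < k) (hkπ : k ≤ π ^ 2 / 4)
    (hξ : ξ ∈ Icc (0 : ℝ) 1) (hη : η ∈ Icc (0 : ℝ) 1) (hl1 : 0 ≤ l1)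
    (hw : HasSecondDerivOn w w' w'' 0 1) (hf : ∀ x ∈ Ioo (0 : ℝ) 1, 0 ≤ w'' x + k * w x)
    (h0 : l1 * w ξ ≤ w' 0) (h1 : w' 1 ≤ l2 * w η) :
    ∀ x ∈ Icc (0 : ℝ) 1, 0 ≤ w x := by
  have hs : 0 < √k := sqrt_pos.2 hk
  have hsπ : √k ≤ π / 2 := (sqrt_le_left (by positivity)).2 (by linarith [div_pow π 2 2])
  have hf' : ∀ x ∈ Ioo (0 : ℝ) 1, 0 ≤ w'' x + √k ^ 2 * w x := by rwa [sq_sqrt hk.le]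
  have hmem : ∀ x ∈ Icc (0 : ℝ) 1, √k * x ∈ Icc 0 (π / 2) := fun x hx =>
    ⟨mul_nonneg hs.le hx.1, (mul_le_of_le_one_right hs.le hx.2).trans hsπ⟩
  have hcos : ∀ x ∈ Icc (0 : ℝ) 1, 0 ≤ cos (√k * x) := fun x hx =>
    cos_nonneg_of_neg_pi_div_two_le_of_le (by linarith [pi_pos, (hmem x hx).1]) (hmem x hx).2
  have hlower : ∀ x ∈ Icc (0 : ℝ) 1,
      √k * w 0 * cos (√k * x) + w' 0 * sin (√k * x) ≤ √k * w x := by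
    intro x hx
    simpa only [sub_zero] using sinusoid_le_of_nonneg_deriv2_add hs.le hx.1
      (by linarith [pi_pos, (hmem x hx).2]) (hw.mono le_rfl hx.2)
      fun t ht => hf' t (Ioo_subset_Ioo_right hx.2 ht)
  have hleft : l1 * (√k * w 0 * cos (√k * ξ)) ≤ w' 0 * (√k - l1 * sin (√k * ξ)) := by
    linarith [mul_le_mul_of_nonneg_left (hlower ξ hξ) hl1, mul_le_mul_of_nonneg_left h0 hs.le]
  have hright : w' 0 * (√k * cos √k - l2 * sin (√k * η)) ≤
      √k * w 0 * (√k * sin √k + l2 * cos (√k * η)) := by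
    linarith [le_mul_deriv_one_sub_of_nonneg_deriv2_add hs hsπ hη hA.right_nonneg hw hf',
      mul_nonneg hs.le (sub_nonneg.2 h1)]
  obtain ⟨hw0, hw0'⟩ := hA.nonneg_of_boundary_ineq hk hl1 (hcos ξ hξ) hleft hright
  intro x hx
  have hsin : 0 ≤ sin (√k * x) :=
    sin_nonneg_of_nonneg_of_le_pi (hmem x hx).1 (by linarith [pi_pos, (hmem x hx).2])
  have hcos_x := hcos x hx
  exact nonneg_of_mul_nonneg_right (le_trans (by positivity) (hlower x hx)) hs

end MaximumPrinciple

theorem stmt6_general {k ξ η l1 l2 : ℝ} {ψ : ℝ → ℝ → ℝ → ℝ} {c c' c'' u u' u'' : ℝ → ℝ}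
    (hk : 0 < k) (hkπ : k ≤ π ^ 2 / 4) (hξ : ξ ∈ Icc (0 : ℝ) 1) (hη : η ∈ Icc (0 : ℝ) 1)
    (hl1 : 0 ≤ l1) (hA : ConditionA1 k ξ η l1 l2)
    (hc : HasSecondDerivOn c c' c'' 0 1) (hu : HasSecondDerivOn u u' u'' 0 1)
    (hc_lower : ∀ x ∈ Ioo (0 : ℝ) 1, -c'' x ≤ ψ x (c x) (c' x))
    (hc0 : l1 * c ξ ≤ c' 0) (hc1 : c' 1 ≤ l2 * c η)
    (hu_upper : ∀ x ∈ Ioo (0 : ℝ) 1, ψ x (c x) (c' x) - k * c x ≤ -u'' x - k * u x)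
    (hu0 : u' 0 ≤ l1 * u ξ) (hu1 : l2 * u η ≤ u' 1) :
    ∀ x ∈ Icc (0 : ℝ) 1, u x ≤ c x := by
  have hdiff : ∀ x ∈ Icc (0 : ℝ) 1, 0 ≤ c x - u x :=
    hA.nonneg_of_nonneg_deriv2_add hk hkπ hξ hη hl1 (hc.sub hu)
      (fun x hx => by linarith [hc_lower x hx, hu_upper x hx]) (by linarith) (by linarith)
  exact fun x hx => sub_nonneg.1 (hdiff x hx)

/-- under [A1], if `cₙ` is a lower solution of the BVP and `cₙ₊₁` solves the
linear iterative problem, then `cₙ₊₁ ≤ cₙ` on `[0,1]`. -/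
theorem stmt6 (k ξ η l1 l2 : ℝ) (ψ : ℝ → ℝ → ℝ → ℝ) (cn cn1 : ℝ → ℝ)
    (hk : 0 < k) (hk' : k < Real.pi ^ 2 / 4)
    (hξ : 0 < ξ) (hξη : ξ ≤ η) (hη : η < 1)
    (hl1 : 0 ≤ l1) (hl2 : 0 ≤ l2)
    -- condition [A1]
    (hD : 0 < Dk k ξ η l1 l2)
    (hA1b : 0 ≤ Real.sqrt k * Real.cos (Real.sqrt k) - l2 * Real.sin (Real.sqrt k * η))
    (hA1c : 0 < Real.sqrt k - l1 * Real.sin (Real.sqrt k * ξ))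
    (hψ : Continuous fun p : ℝ × ℝ × ℝ => ψ p.1 p.2.1 p.2.2)
    (hcn : ContDiff ℝ 2 cn) (hcn1 : ContDiff ℝ 2 cn1)
    -- `cₙ` is a lower solution
    (hlow : ∀ x ∈ Ioo (0:ℝ) 1, -(deriv (deriv cn) x) ≤ ψ x (cn x) (deriv cn x))
    (hbc0 : deriv cn 0 = l1 * cn ξ)
    (hbc1 : deriv cn 1 ≤ l2 * cn η)
    -- `cₙ₊₁` solves the iterative scheme
    (heq : ∀ x ∈ Ioo (0:ℝ) 1,
      -(deriv (deriv cn1) x) - k * cn1 x = ψ x (cn x) (deriv cn x) - k * cn x)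
    (hbc0' : deriv cn1 0 = l1 * cn1 ξ)
    (hbc1' : deriv cn1 1 = l2 * cn1 η) :
    ∀ x ∈ Icc (0:ℝ) 1, cn1 x ≤ cn x := by
  exact stmt6_general hk hk'.le ⟨hξ.le, (hξη.trans_lt hη).le⟩ ⟨hξ.le.trans hξη, hη.le⟩ hl1
    ⟨hD, hA1b, hA1c⟩ (.of_contDiff hcn) (.of_contDiff hcn1) hlow hbc0.ge hbc1
    (fun x hx => (heq x hx).ge) hbc0'.le hbc1'.ge
end

section
/- Let k < 0, 0 < ξ ≤ η < 1, λ₁, λ₂ ≥ 0, and suppose condition [A1′] holds. Then the Green's function G(x,s) satisfies G(x,s) ≤ 0 for all x, s ∈ [0,1]. -/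
open Real Set

/-- `D_k′ = |k|·sinh m − λ₂·m·cosh(mη) − λ₁λ₂·sinh(m(η−ξ)) + λ₁·m·cosh(m(ξ−1))`,
where `m = √|k|`. -/
noncomputable def Dk' (k ξ η l1 l2 : ℝ) : ℝ :=
  |k| * Real.sinh (Real.sqrt |k|) - l2 * Real.sqrt |k| * Real.cosh (Real.sqrt |k| * η) -
    l1 * l2 * Real.sinh (Real.sqrt |k| * (η - ξ)) +
    l1 * Real.sqrt |k| * Real.cosh (Real.sqrt |k| * (ξ - 1))

/-- The Green's function of the four-point BVP `-u'' - k u = g`,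
`u'(0) = λ₁ u(ξ)`, `u'(1) = λ₂ u(η)` in the case `k < 0`, with `m = √|k|`. -/
noncomputable def GreenNeg (k ξ η l1 l2 x s : ℝ) : ℝ :=
  (1 / (Real.sqrt |k| * Dk' k ξ η l1 l2)) *
    (if 0 ≤ x ∧ x ≤ s ∧ s ≤ ξ then
      Real.sqrt |k| * Real.cosh (Real.sqrt |k| * x) *
          (l2 * Real.sinh (Real.sqrt |k| * (η - s)) -
            Real.sqrt |k| * Real.cosh (Real.sqrt |k| * (s - 1))) +
        l1 * Real.sinh (Real.sqrt |k| * (s - x)) *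
          (Real.sqrt |k| * Real.cosh (Real.sqrt |k| * (ξ - 1)) -
            l2 * Real.sinh (Real.sqrt |k| * (η - ξ)))
    else if s ≤ x ∧ s ≤ ξ then
      -(Real.sqrt |k| * Real.cosh (Real.sqrt |k| * s) *
        (Real.sqrt |k| * Real.cosh (Real.sqrt |k| * (x - 1)) +
          l2 * Real.sinh (Real.sqrt |k| * (x - η))))
    else if ξ ≤ x ∧ x ≤ s ∧ s ≤ η then
      -((Real.sqrt |k| * Real.cosh (Real.sqrt |k| * x) +
          l1 * Real.sinh (Real.sqrt |k| * (x - ξ))) *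
        (Real.sqrt |k| * Real.cosh (Real.sqrt |k| * (s - 1)) +
          l2 * Real.sinh (Real.sqrt |k| * (s - η))))
    else if s ≤ x ∧ ξ ≤ s ∧ s ≤ η then
      -((Real.sqrt |k| * Real.cosh (Real.sqrt |k| * s) +
          l1 * Real.sinh (Real.sqrt |k| * (s - ξ))) *
        (Real.sqrt |k| * Real.cosh (Real.sqrt |k| * (x - 1)) +
          l2 * Real.sinh (Real.sqrt |k| * (x - η))))
    else if η ≤ x ∧ x ≤ s ∧ s ≤ 1 then
      -(Real.sqrt |k| * Real.cosh (Real.sqrt |k| * (s - 1)) *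
        (Real.sqrt |k| * Real.cosh (Real.sqrt |k| * x) +
          l1 * Real.sinh (Real.sqrt |k| * (x - ξ))))
    else
      Real.sqrt |k| * Real.cosh (Real.sqrt |k| * (x - 1)) *
          (l1 * Real.sinh (Real.sqrt |k| * (ξ - s)) -
            Real.sqrt |k| * Real.cosh (Real.sqrt |k| * s)) +
        l2 * Real.sinh (Real.sqrt |k| * (s - x)) *
          (Real.sqrt |k| * Real.cosh (Real.sqrt |k| * η) +
            l1 * Real.sinh (Real.sqrt |k| * (η - ξ))))

/-! Let `φ` (`leftSolution`) and `ψ` (`rightSolution`) solve `u'' = m² u` with the left and the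
right boundary condition respectively. The branches of the numerator are, up to sign, products of
`φ`, `ψ` and `cosh`, except in two corners, where a correction `λ₁ sinh (m (s - x)) ψ ξ` or
`λ₂ sinh (m (s - x)) φ η` has to be absorbed. For the first, `ψ / cosh` is antitone, because
`ψ' 0 ≤ 0` by the first part of [A1′]. For the second, `φ` lies between `C sinh (m x)` and
`C cosh (m x)` with `C = m + λ₁ exp (-m ξ)`, where the lower bound comes from
`φ 0 = m - λ₁ sinh (m ξ) ≥ 0`, and `sinh a sinh (s - x) ≤ cosh (x - a) sinh s`. -/

theorem sinh_mul_sinh_sub_le_cosh_sub_mul_sinh {a x s : ℝ} (ha : 0 ≤ a) (hx : 0 ≤ x)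
    (hs : 0 ≤ s) : sinh a * sinh (s - x) ≤ cosh (x - a) * sinh s := by
  have expansion : cosh (x - a) * sinh s - sinh a * sinh (s - x) =
      cosh x * sinh s * (cosh a - sinh a) + sinh a * sinh x * (cosh s - sinh s) := by
    rw [cosh_sub, sinh_sub]
    ring
  have : 0 ≤ sinh a := sinh_nonneg_iff.2 ha
  have : 0 ≤ sinh x := sinh_nonneg_iff.2 hx
  have : 0 ≤ sinh s := sinh_nonneg_iff.2 hs
  have : 0 ≤ cosh a - sinh a := sub_nonneg.2 (sinh_lt_cosh a).le
  have : 0 ≤ cosh s - sinh s := sub_nonneg.2 (sinh_lt_cosh s).le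
  rw [← sub_nonneg, expansion]
  positivity

theorem sinh_sub_mul_cosh_le {x s z : ℝ} (hx : 0 ≤ x) (hsz : s ≤ z) :
    sinh (s - x) * cosh z ≤ sinh z * (cosh x * cosh s) := by
  have expansion : sinh z * (cosh x * cosh s) - sinh (s - x) * cosh z =
      cosh x * sinh (z - s) + cosh s * cosh z * sinh x := by
    rw [sinh_sub, sinh_sub]
    ring
  have : 0 ≤ sinh x := sinh_nonneg_iff.2 hx
  have : 0 ≤ sinh (z - s) := sinh_nonneg_iff.2 (sub_nonneg.2 hsz)
  rw [← sub_nonneg, expansion]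
  positivity

theorem sinh_mul_sub_comm (m a b : ℝ) : sinh (m * (a - b)) = -sinh (m * (b - a)) := by
  rw [← sinh_neg, ← mul_neg, neg_sub]

/-- The solution of `u'' = m² u`, `u' 0 = l * u ξ`, normalized so that it appears as a factor of the
Green's function. -/
noncomputable def leftSolution (m l ξ x : ℝ) : ℝ :=
  m * cosh (m * x) + l * sinh (m * (x - ξ))

/-- The solution of `u'' = m² u`, `u' 1 = l * u η`, normalized so that it appears as a factor of the
Green's function. -/
noncomputable def rightSolution (m l η x : ℝ) : ℝ :=
  m * cosh (m * (x - 1)) + l * sinh (m * (x - η))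

section Solutions

variable {m l l1 l2 ξ η x s : ℝ}

theorem mul_sinh_le_leftSolution (hl : l * sinh (m * ξ) ≤ m) :
    (m + l * exp (-(m * ξ))) * sinh (m * x) ≤ leftSolution m l ξ x := by
  have difference : leftSolution m l ξ x - (m + l * exp (-(m * ξ))) * sinh (m * x) =
      (m - l * sinh (m * ξ)) * (cosh (m * x) - sinh (m * x)) := by
    rw [leftSolution, ← cosh_sub_sinh, mul_sub m, sinh_sub]
    ring
  rw [← sub_nonneg, difference]
  exact mul_nonneg (sub_nonneg.2 hl) (sub_nonneg.2 (sinh_lt_cosh _).le)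

theorem leftSolution_le_mul_cosh (hl : 0 ≤ l) :
    leftSolution m l ξ x ≤ (m + l * exp (-(m * ξ))) * cosh (m * x) := by
  have difference : (m + l * exp (-(m * ξ))) * cosh (m * x) - leftSolution m l ξ x =
      l * cosh (m * ξ) * (cosh (m * x) - sinh (m * x)) := by
    rw [leftSolution, ← cosh_sub_sinh, mul_sub m, sinh_sub]
    ring
  rw [← sub_nonneg, difference]
  exact mul_nonneg (mul_nonneg hl (cosh_pos _).le) (sub_nonneg.2 (sinh_lt_cosh _).le)

theorem leftSolution_nonneg (hm : 0 ≤ m) (hl : 0 ≤ l) (hlξ : l * sinh (m * ξ) ≤ m)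
    (hx : 0 ≤ x) : 0 ≤ leftSolution m l ξ x := by
  have : 0 ≤ sinh (m * x) := sinh_nonneg_iff.2 (mul_nonneg hm hx)
  exact le_trans (by positivity) (mul_sinh_le_leftSolution hlξ)

theorem mul_cosh_mul_sinh_sub_le (hm : 0 ≤ m) (hl : 0 ≤ l)
    (hlη : l * cosh (m * η) ≤ m * sinh m) (hx : 0 ≤ x) (hs : 0 ≤ s) :
    l * cosh (m * η) * sinh (m * (s - x)) ≤ m * cosh (m * (x - 1)) * sinh (m * s) := by
  rcases le_total x s with hxs | hsx
  · have : 0 ≤ sinh (m * (s - x)) :=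
      sinh_nonneg_iff.2 (mul_nonneg hm (sub_nonneg.2 hxs))
    have hcomparison : sinh m * sinh (m * (s - x)) ≤ cosh (m * (x - 1)) * sinh (m * s) := by
      simpa only [mul_sub, mul_one] using sinh_mul_sinh_sub_le_cosh_sub_mul_sinh hm
        (mul_nonneg hm hx) (mul_nonneg hm hs)
    calc l * cosh (m * η) * sinh (m * (s - x))
        ≤ m * sinh m * sinh (m * (s - x)) := by gcongr
      _ = m * (sinh m * sinh (m * (s - x))) := by ring
      _ ≤ m * (cosh (m * (x - 1)) * sinh (m * s)) := by gcongr
      _ = m * cosh (m * (x - 1)) * sinh (m * s) := by ring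
  · have hsinh : sinh (m * (s - x)) ≤ 0 :=
      sinh_nonpos_iff.2 (mul_nonpos_of_nonneg_of_nonpos hm (sub_nonpos.2 hsx))
    have : 0 ≤ sinh (m * s) := sinh_nonneg_iff.2 (mul_nonneg hm hs)
    exact (mul_nonpos_of_nonneg_of_nonpos (by positivity) hsinh).trans (by positivity)

theorem rightSolution_nonneg (hm : 0 ≤ m) (hη : 0 ≤ η) (hl : 0 ≤ l)
    (hlη : l * cosh (m * η) ≤ m * sinh m) (hx : 0 ≤ x) : 0 ≤ rightSolution m l η x := by
  have hbound : l * sinh (m * (η - x)) * cosh (m * η) ≤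
      m * cosh (m * (x - 1)) * cosh (m * η) := by
    calc l * sinh (m * (η - x)) * cosh (m * η)
        = l * cosh (m * η) * sinh (m * (η - x)) := by ring
      _ ≤ m * cosh (m * (x - 1)) * sinh (m * η) := mul_cosh_mul_sinh_sub_le hm hl hlη hx hη
      _ ≤ m * cosh (m * (x - 1)) * cosh (m * η) := by
        gcongr
        exact (sinh_lt_cosh _).le
  have hcancel := le_of_mul_le_mul_right hbound (cosh_pos _)
  rw [rightSolution, sinh_mul_sub_comm]
  linarith

theorem antitone_rightSolution_div_cosh (hm : 0 ≤ m)
    (hlη : l * cosh (m * η) ≤ m * sinh m) :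
    Antitone fun x => rightSolution m l η x / cosh (m * x) := by
  intro x y hxy
  have hsinh : 0 ≤ sinh (m * (y - x)) := sinh_nonneg_iff.2 (mul_nonneg hm (sub_nonneg.2 hxy))
  have difference : rightSolution m l η x * cosh (m * y) - rightSolution m l η y * cosh (m * x) =
      (m * sinh m - l * cosh (m * η)) * sinh (m * (y - x)) := by
    simp only [rightSolution, mul_sub m, mul_one, sinh_sub, cosh_sub]
    ring
  refine (div_le_div_iff₀ (cosh_pos _) (cosh_pos _)).2 (sub_nonneg.1 ?_)
  rw [difference]
  exact mul_nonneg (sub_nonneg.2 hlη) hsinh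

theorem mul_sinh_sub_mul_rightSolution_le (hm : 0 ≤ m) (hξ : 0 ≤ ξ) (hη : 0 ≤ η) (hl1 : 0 ≤ l1)
    (hl2 : 0 ≤ l2) (hlξ : l1 * sinh (m * ξ) ≤ m) (hlη : l2 * cosh (m * η) ≤ m * sinh m)
    (hx : 0 ≤ x) (hsξ : s ≤ ξ) :
    l1 * sinh (m * (s - x)) * rightSolution m l2 η ξ ≤
      m * cosh (m * x) * rightSolution m l2 η s := by
  have hψ : 0 ≤ rightSolution m l2 η ξ := rightSolution_nonneg hm hη hl2 hlη hξ
  have hsinh : sinh (m * (s - x)) * cosh (m * ξ) ≤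
      sinh (m * ξ) * (cosh (m * x) * cosh (m * s)) := by
    rw [mul_sub]
    exact sinh_sub_mul_cosh_le (mul_nonneg hm hx) (by gcongr)
  have hratio : rightSolution m l2 η ξ * cosh (m * s) ≤ rightSolution m l2 η s * cosh (m * ξ) :=
    (div_le_div_iff₀ (cosh_pos _) (cosh_pos _)).1 (antitone_rightSolution_div_cosh hm hlη hsξ)
  refine le_of_mul_le_mul_right ?_ (cosh_pos (m * ξ))
  calc l1 * sinh (m * (s - x)) * rightSolution m l2 η ξ * cosh (m * ξ)
      = l1 * (sinh (m * (s - x)) * cosh (m * ξ)) * rightSolution m l2 η ξ := by ring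
    _ ≤ l1 * (sinh (m * ξ) * (cosh (m * x) * cosh (m * s))) * rightSolution m l2 η ξ := by gcongr
    _ = l1 * sinh (m * ξ) * cosh (m * x) * (rightSolution m l2 η ξ * cosh (m * s)) := by ring
    _ ≤ m * cosh (m * x) * (rightSolution m l2 η ξ * cosh (m * s)) := by gcongr
    _ ≤ m * cosh (m * x) * (rightSolution m l2 η s * cosh (m * ξ)) := by gcongr
    _ = m * cosh (m * x) * rightSolution m l2 η s * cosh (m * ξ) := by ring

theorem mul_sinh_sub_mul_leftSolution_le (hm : 0 ≤ m) (hη : 0 ≤ η) (hl1 : 0 ≤ l1)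
    (hl2 : 0 ≤ l2) (hlξ : l1 * sinh (m * ξ) ≤ m) (hlη : l2 * cosh (m * η) ≤ m * sinh m)
    (hx : 0 ≤ x) (hs : 0 ≤ s) :
    l2 * sinh (m * (s - x)) * leftSolution m l1 ξ η ≤
      m * cosh (m * (x - 1)) * leftSolution m l1 ξ s := by
  rcases le_total x s with hxs | hsx
  · have : 0 ≤ sinh (m * (s - x)) :=
      sinh_nonneg_iff.2 (mul_nonneg hm (sub_nonneg.2 hxs))
    set C := m + l1 * exp (-(m * ξ))
    have hC : 0 ≤ C := by positivity
    calc l2 * sinh (m * (s - x)) * leftSolution m l1 ξ η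
        ≤ l2 * sinh (m * (s - x)) * (C * cosh (m * η)) := by
          gcongr
          exact leftSolution_le_mul_cosh hl1
      _ = C * (l2 * cosh (m * η) * sinh (m * (s - x))) := by ring
      _ ≤ C * (m * cosh (m * (x - 1)) * sinh (m * s)) :=
          mul_le_mul_of_nonneg_left (mul_cosh_mul_sinh_sub_le hm hl2 hlη hx hs) hC
      _ = m * cosh (m * (x - 1)) * (C * sinh (m * s)) := by ring
      _ ≤ m * cosh (m * (x - 1)) * leftSolution m l1 ξ s := by
          gcongr
          exact mul_sinh_le_leftSolution hlξ
  · have hsinh : sinh (m * (s - x)) ≤ 0 :=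
      sinh_nonpos_iff.2 (mul_nonpos_of_nonneg_of_nonpos hm (sub_nonpos.2 hsx))
    have hφη : 0 ≤ leftSolution m l1 ξ η := leftSolution_nonneg hm hl1 hlξ hη
    have hφs : 0 ≤ leftSolution m l1 ξ s := leftSolution_nonneg hm hl1 hlξ hs
    have hleft : l2 * sinh (m * (s - x)) * leftSolution m l1 ξ η ≤ 0 :=
      mul_nonpos_of_nonpos_of_nonneg (mul_nonpos_of_nonneg_of_nonpos hl2 hsinh) hφη
    exact hleft.trans (by positivity)

end Solutions

section Green

variable {k ξ η l1 l2 x s : ℝ}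

theorem Dk'_eq_add_mul_rightSolution (k ξ η l1 l2 : ℝ) :
    Dk' k ξ η l1 l2 = √|k| * (√|k| * sinh √|k| - l2 * cosh (√|k| * η)) +
      l1 * rightSolution √|k| l2 η ξ := by
  rw [Dk', rightSolution, sinh_mul_sub_comm _ η ξ]
  linear_combination -sinh √|k| * mul_self_sqrt (abs_nonneg k)

-- `Dk'` can vanish, e.g. for `l1 = 0` with equality in `hlη`; then `GreenNeg` is `0`, as
-- `1 / 0 = 0`.
theorem Dk'_nonneg (hξ : 0 ≤ ξ) (hη : 0 ≤ η) (hl1 : 0 ≤ l1) (hl2 : 0 ≤ l2)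
    (hlη : l2 * cosh (√|k| * η) ≤ √|k| * sinh √|k|) : 0 ≤ Dk' k ξ η l1 l2 := by
  rw [Dk'_eq_add_mul_rightSolution]
  exact add_nonneg (mul_nonneg (sqrt_nonneg _) (sub_nonneg.2 hlη))
    (mul_nonneg hl1 (rightSolution_nonneg (sqrt_nonneg _) hη hl2 hlη hξ))

theorem stmt13_general (hk : k ≠ 0) (hξ : 0 ≤ ξ) (hη : 0 ≤ η) (hl1 : 0 ≤ l1) (hl2 : 0 ≤ l2)
    (hlξ : l1 * sinh (√|k| * ξ) ≤ √|k|) (hlη : l2 * cosh (√|k| * η) ≤ √|k| * sinh √|k|)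
    (hx : 0 ≤ x) (hs : 0 ≤ s) : GreenNeg k ξ η l1 l2 x s ≤ 0 := by
  have hm : 0 < √|k| := sqrt_pos.2 (abs_pos.2 hk)
  have hD : 0 ≤ Dk' k ξ η l1 l2 := Dk'_nonneg hξ hη hl1 hl2 hlη
  have hφ {y : ℝ} (hy : 0 ≤ y) := leftSolution_nonneg hm.le hl1 hlξ hy
  have hψ {y : ℝ} (hy : 0 ≤ y) := rightSolution_nonneg hm.le hη hl2 hlη hy
  refine mul_nonpos_of_nonneg_of_nonpos (one_div_nonneg.2 (mul_nonneg hm.le hD)) ?_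
  split_ifs with hcorner
  · have h := mul_sinh_sub_mul_rightSolution_le hm.le hξ hη hl1 hl2 hlξ hlη hx hcorner.2.2
    rw [sinh_mul_sub_comm _ η s, sinh_mul_sub_comm _ η ξ]
    unfold rightSolution at h
    linarith
  · exact neg_nonpos.2 (mul_nonneg (mul_nonneg hm.le (cosh_pos _).le) (hψ hx))
  · exact neg_nonpos.2 (mul_nonneg (hφ hx) (hψ hs))
  · exact neg_nonpos.2 (mul_nonneg (hφ hs) (hψ hx))
  · exact neg_nonpos.2 (mul_nonneg (mul_nonneg hm.le (cosh_pos _).le) (hφ hx))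
  -- The `else` branch is larger than `η ≤ s ≤ x`: points with `x < ξ < s` or `x < η < s` land here
  -- too, so `s - x` may have either sign.
  · have h := mul_sinh_sub_mul_leftSolution_le hm.le hη hl1 hl2 hlξ hlη hx hs
    rw [sinh_mul_sub_comm _ ξ s]
    unfold leftSolution at h
    linarith

end Green

/-- for `k < 0`, under condition [A1′], the Green's function is nonpositive
on `[0,1]²`. -/
theorem stmt13 (k ξ η l1 l2 : ℝ)
    (hk : k < 0)
    (hξ : 0 < ξ) (hξη : ξ ≤ η) (hη : η < 1)
    (hl1 : 0 ≤ l1) (hl2 : 0 ≤ l2)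
    -- condition [A1′], with m = √|k|
    (hA1a : 0 ≤ Real.sqrt |k| * Real.sinh (Real.sqrt |k|) -
      l2 * Real.cosh (Real.sqrt |k| * η))
    (hA1b : Real.sqrt |k| * Real.sinh (Real.sqrt |k| * ξ) +
      (l1 - Real.sqrt |k|) * Real.cosh (Real.sqrt |k| * ξ) ≤ 0)
    (hA1c : 0 < Real.sqrt |k| - l1 * Real.cosh (Real.sqrt |k| * ξ)) :
    ∀ x ∈ Icc (0:ℝ) 1, ∀ s ∈ Icc (0:ℝ) 1, GreenNeg k ξ η l1 l2 x s ≤ 0 := by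
  intro x hx s hs
  exact stmt13_general hk.ne hξ.le (hξ.le.trans hξη) hl1 hl2
    ((mul_le_mul_of_nonneg_left (sinh_lt_cosh _).le hl1).trans (sub_pos.1 hA1c).le)
    (sub_nonneg.1 hA1a) hx.1 hs.1
end
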